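/- Let n ≥ 2 and let E ⊂ ℝⁿ be an 𝓗ˢ-measurable set with 0 < 𝓗ˢ(E) < ∞, where 0 < s = dim_H E ≤ 1. Then there exists a set X ⊂ S^{n−1} of unit vectors with dim_H X ≤ (n−2) + s such that for every unit vector e ∈ S^{n−1} \ X and every 𝓗ˢ-measurable set F ⊂ E with 𝓗ˢ(F) > 0, the set {⟨x, e⟩ : x ∈ F} ⊂ ℝ has Hausdorff dimension equal to s. -/

import Mathlib

open MeasureTheory RealInnerProductSpace

/-!
Let `μ` be a finite measure that is absolutely continuous with respect to `𝓗ˢ`. Up to a null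
set, the space is a countable union of pieces on which the potential `∫ |x - y|^(-σ) dμ(y)` is
bounded, for any `σ < s`. Let `λ` be the law of the difference of a point of such a piece and an
independent point of `μ`, so that `∫ |z|^(-σ) dλ(z)` is finite.

Suppose that every direction `e` in `A` has a heavy strip, `λ {z | |⟨z, e⟩| ≤ δ} ≥ a`. A
Frostman measure on `A` of exponent `d + σ`, where `n = d + 2`, gives mass at most of order
`δ^σ (1 + |z|^(-σ))` to the directions whose `δ`-strip contains `z`, because these directions form a
band around a great subsphere which is covered by boundedly many times `r⁻ᵈ` balls of its own
width `r`. Counting pairs `(e, z)` in both orders bounds the `(d + σ)`-dimensional content of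
`A` by a multiple of `δ^σ / a`. With `a = δ^t` for dyadic `δ` and `t < σ`, the Borel–Cantelli
lemma shows that outside an `𝓗^(d+σ)`-null set of directions the projected measure has finite
`t`-potential at almost every projected point, so projections of non-null sets have positive
`𝓗ᵗ` measure. Now let `t` increase to `s`.
-/

section

open Filter Metric Set
open scoped ENNReal NNReal Topology

section HausdorffContent

/-- The `u`-dimensional Hausdorff content, i.e. the size `∞` approximation of `𝓗ᵘ`. Unlike `𝓗ᵘ`
it is finite on bounded sets and controlled by covers at a single scale, and for `u > 0` it has the
same null sets as `𝓗ᵘ`. -/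
noncomputable def hausdorffContent {X : Type*} [PseudoEMetricSpace X] (u : ℝ) : OuterMeasure X :=
  OuterMeasure.boundedBy fun U => ediam U ^ u

theorem hausdorffContent_le_ediam_rpow {X : Type*} [PseudoEMetricSpace X] (u : ℝ) (U : Set X) :
    hausdorffContent u U ≤ ediam U ^ u :=
  OuterMeasure.boundedBy_le U

theorem hausdorffContent_closedEBall_le {X : Type*} [PseudoEMetricSpace X] {u : ℝ} (hu : 0 ≤ u)
    (x : X) (r : ℝ≥0∞) : hausdorffContent u (closedEBall x r) ≤ (2 * r) ^ u :=
  (hausdorffContent_le_ediam_rpow u _).trans (ENNReal.rpow_le_rpow ediam_closedEBall_le hu)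

theorem hausdorffContent_le_card_mul {X : Type*} [PseudoEMetricSpace X] {u : ℝ} (hu : 0 ≤ u)
    {A : Set X} {r : ℝ≥0} {N : Finset X} (hN : IsCover r A N) :
    hausdorffContent u A ≤ N.card * (2 * r) ^ u :=
  calc
    hausdorffContent u A ≤ hausdorffContent u (⋃ p ∈ N, closedEBall p r) :=
      measure_mono (isCover_iff_subset_iUnion_closedEBall.1 hN)
    _ ≤ ∑ p ∈ N, hausdorffContent u (closedEBall p r) := measure_biUnion_finset_le N _
    _ ≤ ∑ _p ∈ N, (2 * r : ℝ≥0∞) ^ u :=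
      Finset.sum_le_sum fun p _ => hausdorffContent_closedEBall_le hu p r
    _ = N.card * (2 * r) ^ u := by rw [Finset.sum_const, nsmul_eq_mul]

theorem hausdorffMeasure_eq_zero_of_hausdorffContent_eq_zero {X : Type*} [EMetricSpace X]
    [MeasurableSpace X] [BorelSpace X] {u : ℝ} (hu : 0 < u) {A : Set X}
    (hA : hausdorffContent u A = 0) : μH[u] A = 0 := by
  have hcover (k : ℕ) : ∃ U : ℕ → Set X, A ⊆ ⋃ i, U i ∧
      ∑' i, ⨆ _ : (U i).Nonempty, ediam (U i) ^ u < 2⁻¹ ^ k := by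
    have : hausdorffContent u A < 2⁻¹ ^ k := by rw [hA]; exact ENNReal.pow_pos (by simp) k
    rw [hausdorffContent, OuterMeasure.boundedBy_apply] at this
    simpa only [iInf_lt_iff, exists_prop] using this
  choose U hAU hU using hcover
  have hsup (k i : ℕ) : (⨆ _ : (U k i).Nonempty, ediam (U k i) ^ u) = ediam (U k i) ^ u := by
    rcases (U k i).eq_empty_or_nonempty with h | h <;> simp [h, hu]
  simp only [hsup] at hU
  have hlim : Tendsto (fun k : ℕ => (2⁻¹ : ℝ≥0∞) ^ k) atTop (𝓝 0) :=
    ENNReal.tendsto_pow_atTop_nhds_zero_of_lt_one (by simp)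
  have hlim' : Tendsto (fun k : ℕ => ((2⁻¹ : ℝ≥0∞) ^ k) ^ u⁻¹) atTop (𝓝 0) := by
    simpa [hu] using hlim.ennrpow_const u⁻¹
  have hdiam (k i : ℕ) : ediam (U k i) ≤ ((2⁻¹ : ℝ≥0∞) ^ k) ^ u⁻¹ :=
    (ENNReal.le_rpow_inv_iff hu).2 ((ENNReal.le_tsum i).trans (hU k).le)
  refine le_antisymm ?_ zero_le
  calc
    μH[u] A ≤ liminf (fun k => ∑' i, ediam (U k i) ^ u) atTop :=
      Measure.hausdorffMeasure_le_liminf_tsum u A _ hlim' U (.of_forall hdiam) (.of_forall hAU)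
    _ ≤ liminf (fun k : ℕ => (2⁻¹ : ℝ≥0∞) ^ k) atTop :=
      liminf_le_liminf (.of_forall fun k => (hU k).le)
    _ = 0 := hlim.liminf_eq

theorem tsum_inv_two_pow_rpow_ne_top {a : ℝ} (ha : 0 < a) :
    ∑' k : ℕ, ((2⁻¹ : ℝ≥0∞) ^ k) ^ a ≠ ∞ := by
  have h : (2⁻¹ : ℝ≥0∞) ^ a < 1 := ENNReal.rpow_lt_one (by simp) ha
  simp_rw [← ENNReal.rpow_natCast_mul, mul_comm _ a, ENNReal.rpow_mul, ENNReal.rpow_natCast,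
    ENNReal.tsum_geometric]
  exact ENNReal.inv_ne_top.2 (tsub_pos_of_lt h).ne'

theorem hausdorffMeasure_setOf_frequently_eq_zero {X : Type*} [EMetricSpace X] [MeasurableSpace X]
    [BorelSpace X] {u t s : ℝ} (hu : 0 < u) (hts : t < s) {C : ℝ≥0∞} (hC : C ≠ ∞) {A : ℕ → Set X}
    (h : ∀ k, (2⁻¹ ^ k) ^ t * hausdorffContent u (A k) ≤ C * (2⁻¹ ^ k) ^ s) :
    μH[u] {x | ∃ᶠ k in atTop, x ∈ A k} = 0 := by
  have hcontent (k : ℕ) : hausdorffContent u (A k) ≤ C * ((2⁻¹ : ℝ≥0∞) ^ k) ^ (s - t) := by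
    have hr0 : (2⁻¹ : ℝ≥0∞) ^ k ≠ 0 := by simp
    have hrt : (2⁻¹ : ℝ≥0∞) ^ k ≠ ∞ := by finiteness
    rw [ENNReal.rpow_sub _ _ hr0 hrt, ← mul_div_assoc, ENNReal.le_div_iff_mul_le
      (.inl (ENNReal.rpow_pos hr0.bot_lt hrt).ne') (.inl (ENNReal.rpow_ne_top_of_ne_zero hr0 hrt)),
      mul_comm]
    exact h k
  refine hausdorffMeasure_eq_zero_of_hausdorffContent_eq_zero hu
    (measure_setOfPred_frequently_eq_zero
      (ne_top_of_le_ne_top ?_ (ENNReal.tsum_le_tsum hcontent)))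
  rw [ENNReal.tsum_mul_left]
  exact ENNReal.mul_ne_top hC (tsum_inv_two_pow_rpow_ne_top (sub_pos.2 hts))

end HausdorffContent

section PackingAndDensity

variable {X : Type*} [MeasurableSpace X]

theorem encard_mul_le_measure_univ_of_isSeparated [PseudoEMetricSpace X] [OpensMeasurableSpace X]
    {μ : Measure X} {S : Set X} {c : ℝ≥0∞} {r : ℝ≥0} (hS : IsSeparated (2 * r : ℝ≥0) S)
    (hc : ∀ x ∈ S, c ≤ μ (closedEBall x r)) : S.encard * c ≤ μ univ := by
  have hdisj : Pairwise (Function.onFun Disjoint fun x : S => closedEBall (x : X) r) := by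
    intro x y hxy
    refine disjoint_left.2 fun z hzx hzy => (hS x.2 y.2 (Subtype.coe_ne_coe.2 hxy)).not_ge ?_
    calc
      edist (x : X) y ≤ edist z x + edist z y := edist_triangle_left _ _ z
      _ ≤ (2 * r : ℝ≥0) := by push_cast; rw [two_mul]; exact add_le_add hzx hzy
  calc
    S.encard * c = ∑' _ : S, c := (ENNReal.tsum_set_const S c).symm
    _ ≤ ∑' x : S, μ (closedEBall (x : X) r) := ENNReal.tsum_le_tsum fun x => hc x x.2
    _ ≤ μ (⋃ x : S, closedEBall (x : X) r) :=
      tsum_meas_le_meas_iUnion_of_disjoint μ (fun _ => isClosed_closedEBall.measurableSet) hdisj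
    _ ≤ μ univ := measure_mono (subset_univ _)

theorem exists_isCover_card_mul_le_measure_univ [PseudoEMetricSpace X] [OpensMeasurableSpace X]
    {μ : Measure X} [IsFiniteMeasure μ] {A : Set X} {c : ℝ≥0∞} (hc0 : c ≠ 0) {r : ℝ≥0}
    (hc : ∀ x ∈ A, c ≤ μ (closedEBall x r)) :
    ∃ N : Finset X, IsCover (2 * r) A N ∧ N.card * c ≤ μ univ := by
  have hle {S : Set X} (hSA : S ⊆ A) (hS : IsSeparated (2 * r : ℝ≥0) S) :
      S.encard * c ≤ μ univ :=
    encard_mul_le_measure_univ_of_isSeparated hS fun x hx => hc x (hSA hx)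
  have hpack : packingNumber (2 * r) A ≠ ⊤ := by
    obtain ⟨n, hn⟩ := ENNReal.exists_nat_gt (ENNReal.div_ne_top (measure_ne_top μ univ) hc0)
    refine ne_top_of_le_ne_top (ENat.natCast_ne_top n) (iSup₂_le fun S hSA => iSup_le fun hS => ?_)
    have hSn : (S.encard : ℝ≥0∞) ≤ (n : ℕ∞) :=
      ((ENNReal.le_div_iff_mul_le (.inl hc0) (.inr (by finiteness))).2 (hle hSA hS)).trans
        (by simpa using hn.le)
    exact_mod_cast hSn
  set N := maximalSeparatedSet (2 * r) A
  have hNfin : N.Finite := by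
    rw [← encard_ne_top_iff, encard_maximalSeparatedSet hpack]; exact hpack
  refine ⟨hNfin.toFinset, by simpa using isCover_maximalSeparatedSet hpack, ?_⟩
  have hcard := hle maximalSeparatedSet_subset isSeparated_maximalSeparatedSet
  rwa [hNfin.encard_eq_coe_toFinset_card, ENat.toENNReal_coe] at hcard

theorem mul_hausdorffContent_le_measure_univ [PseudoEMetricSpace X] [OpensMeasurableSpace X]
    (μ : Measure X) [IsFiniteMeasure μ] {u : ℝ} (hu : 0 ≤ u) {A : Set X} {c : ℝ≥0∞} {r : ℝ≥0}
    (hc : ∀ x ∈ A, c ≤ μ (closedEBall x r)) :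
    c * hausdorffContent u A ≤ (4 * r) ^ u * μ univ := by
  rcases eq_or_ne c 0 with rfl | hc0
  · simp
  obtain ⟨N, hN, hcard⟩ := exists_isCover_card_mul_le_measure_univ hc0 hc
  calc
    c * hausdorffContent u A ≤ c * (N.card * (2 * (2 * r : ℝ≥0)) ^ u) := by
      gcongr; exact hausdorffContent_le_card_mul hu hN
    _ = (4 * r) ^ u * (N.card * c) := by
      rw [show (2 * (2 * r : ℝ≥0) : ℝ≥0∞) = 4 * r by push_cast; ring]; ring
    _ ≤ (4 * r) ^ u * μ univ := by gcongr

/-- The points at which `μ` obeys the Frostman growth condition `μ (B(x, r)) ≤ rᵗ` for all dyadic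
radii `r ≤ 2⁻ᵐ`. -/
def frostmanSet [PseudoEMetricSpace X] (μ : Measure X) (t : ℝ) (m : ℕ) : Set X :=
  {x | ∀ k ≥ m, μ (closedEBall x (2⁻¹ ^ k)) ≤ (2⁻¹ ^ k) ^ t}

theorem measurableSet_frostmanSet [PseudoEMetricSpace X] [SecondCountableTopology X]
    [OpensMeasurableSpace X] (μ : Measure X) [SFinite μ] (t : ℝ) (m : ℕ) :
    MeasurableSet (frostmanSet μ t m) := by
  have hball (r : ℝ≥0∞) : Measurable fun x => μ (closedEBall x r) :=
    measurable_measure_prodMk_left (ν := μ)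
      (measurableSet_le (measurable_snd.edist measurable_fst) measurable_const)
  simp only [frostmanSet, ofPred_forall]
  exact .iInter fun k => .iInter fun _ => measurableSet_le (hball _) measurable_const

theorem hausdorffMeasure_compl_iUnion_frostmanSet_eq_zero [EMetricSpace X] [BorelSpace X]
    (μ : Measure X) [IsFiniteMeasure μ] {s t : ℝ} (hs : 0 < s) (hts : t < s) :
    μH[s] (⋃ m, frostmanSet μ t m)ᶜ = 0 := by
  set A : ℕ → Set X := fun k => {x | (2⁻¹ ^ k) ^ t < μ (closedEBall x (2⁻¹ ^ k))} with hA
  have hcontent (k : ℕ) :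
      (2⁻¹ ^ k) ^ t * hausdorffContent s (A k) ≤ 4 ^ s * μ univ * (2⁻¹ ^ k) ^ s := by
    have hcoe : ((2⁻¹ ^ k : ℝ≥0) : ℝ≥0∞) = 2⁻¹ ^ k := by
      rw [ENNReal.coe_pow, ENNReal.coe_inv_two]
    have h := mul_hausdorffContent_le_measure_univ μ (A := A k) (r := 2⁻¹ ^ k) hs.le
      (c := (2⁻¹ ^ k) ^ t) (fun x hx => by rw [hcoe]; exact le_of_lt hx)
    rw [hcoe, ENNReal.mul_rpow_of_nonneg _ _ hs.le] at h
    exact h.trans_eq (mul_right_comm _ _ _)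
  convert hausdorffMeasure_setOf_frequently_eq_zero hs hts (by finiteness) hcontent using 2
  ext x
  simp [frostmanSet, hA, frequently_atTop]

end PackingAndDensity

section DiscreteFrostman

theorem exists_measure_le_and_forall_exists_eq {X ι : Type*} [MeasurableSpace X]
    [MeasurableSingletonClass X] (P : Finset X) (J : Finset ι) {B : ι → Set X}
    (hB : ∀ i, MeasurableSet (B i)) {c : ι → ℝ≥0∞} (hc : ∀ i, c i ≠ ∞)
    (hPB : ∀ p ∈ P, ∃ i ∈ J, p ∈ B i) :
    ∃ ω : Measure X, IsFiniteMeasure ω ∧ (∀ᵐ x ∂ω, x ∈ P) ∧ (∀ i ∈ J, ω (B i) ≤ c i) ∧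
      ∀ p ∈ P, ∃ i ∈ J, p ∈ B i ∧ ω (B i) = c i := by
  classical
  induction P using Finset.induction_on with
  | empty => exact ⟨0, inferInstance, by simp, by simp, by simp⟩
  | insert p P _ ih =>
    obtain ⟨ω, hω, hωP, hle, htight⟩ := ih fun q hq => hPB q (Finset.mem_insert_of_mem hq)
    obtain ⟨i₀, hi₀, hmin⟩ := Finset.exists_min_image {i ∈ J | p ∈ B i}
      (fun i => c i - ω (B i)) (by simpa [Finset.Nonempty] using hPB p (Finset.mem_insert_self p P))
    obtain ⟨hi₀J, hpi₀⟩ := Finset.mem_filter.1 hi₀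
    -- Increase the mass at `p` until the first constraint involving `p` becomes tight.
    set a := c i₀ - ω (B i₀)
    have ha : a ≠ ∞ := ENNReal.sub_ne_top (hc i₀)
    have hωa (i : ι) : (ω + a • Measure.dirac p) (B i) = ω (B i) + a * (B i).indicator 1 p := by
      simp [Measure.dirac_apply' p (hB i)]
    have hle' (i : ι) (hi : i ∈ J) : (ω + a • Measure.dirac p) (B i) ≤ c i := by
      rw [hωa]
      by_cases hp : p ∈ B i
      · calc
          ω (B i) + a * (B i).indicator 1 p ≤ ω (B i) + (c i - ω (B i)) := by
            simp only [hp, indicator_of_mem, Pi.one_apply, mul_one]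
            gcongr
            exact hmin i (Finset.mem_filter.2 ⟨hi, hp⟩)
          _ = c i := add_tsub_cancel_of_le (hle i hi)
      · simpa [hp] using hle i hi
    refine ⟨ω + a • Measure.dirac p, ⟨by simp [ha.lt_top]⟩, ?_, hle', fun q hq => ?_⟩
    · exact ae_add_measure_iff.2 ⟨hωP.mono fun x => Finset.mem_insert_of_mem,
        Measure.ae_smul_measure ((ae_dirac_iff (Finset.measurableSet _)).2
          (Finset.mem_insert_self p P)) a⟩
    · rcases Finset.mem_insert.1 hq with rfl | hqP
      · exact ⟨i₀, hi₀J, hpi₀, by simp [hωa, hpi₀, a, add_tsub_cancel_of_le (hle i₀ hi₀J)]⟩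
      · obtain ⟨i, hi, hqi, heq⟩ := htight q hqP
        exact ⟨i, hi, hqi, (hle' i hi).antisymm (by rw [hωa, heq]; exact le_self_add)⟩

theorem measure_closedEBall_le_of_forall_pair {X : Type*} [PseudoMetricSpace X]
    [MeasurableSpace X] {ω : Measure X} {P : Finset X} (hωP : ∀ᵐ x ∂ω, x ∈ P) {δ : ℝ≥0} {u : ℝ}
    (hu : 0 ≤ u) (hω : ∀ p ∈ P, ∀ q ∈ P,
      ω (closedEBall p (max δ (nndist p q) : ℝ≥0)) ≤ ((max δ (nndist p q) : ℝ≥0) : ℝ≥0∞) ^ u)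
    (x : X) {r : ℝ≥0} (hr : δ ≤ r) : ω (closedEBall x r) ≤ (2 * r) ^ u := by
  classical
  set Q := {p ∈ P | p ∈ closedEBall x r} with hQ
  have hmem (p : X) (hp : p ∈ P) (hpx : p ∈ closedEBall x r) : p ∈ Q :=
    Finset.mem_filter.2 ⟨hp, hpx⟩
  rcases Q.eq_empty_or_nonempty with hemp | ⟨p, hp⟩
  · have hnull : ∀ᵐ y ∂ω, y ∉ closedEBall x r := hωP.mono fun y hyP hyx => by
      simpa [hemp] using hmem y hyP hyx
    rw [measure_eq_zero_iff_ae_notMem.2 hnull]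
    exact zero_le
  obtain ⟨q, hq, hmax⟩ := Q.exists_max_image (nndist p) ⟨p, hp⟩
  simp only [hQ, Finset.mem_filter, mem_closedEBall, edist_le_coe] at hp hq
  have hpq : nndist p q ≤ 2 * r :=
    calc
      nndist p q ≤ nndist p x + nndist q x := nndist_triangle_right p q x
      _ ≤ 2 * r := by rw [two_mul]; exact add_le_add hp.2 hq.2
  have hδ : δ ≤ 2 * r := hr.trans (le_mul_of_one_le_left' one_le_two)
  calc
    ω (closedEBall x r) ≤ ω (closedEBall p (max δ (nndist p q) : ℝ≥0)) := by
      refine measure_mono_ae (hωP.mono fun y hyP hyx => mem_closedEBall'.2 ?_)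
      rw [edist_le_coe]
      exact (hmax y (hmem y hyP hyx)).trans (le_max_right _ _)
    _ ≤ ((max δ (nndist p q) : ℝ≥0) : ℝ≥0∞) ^ u := hω p hp.1 q hq.1
    _ ≤ (2 * r) ^ u := by
      gcongr
      exact_mod_cast max_le hδ hpq

theorem hausdorffContent_le_of_isCover_of_rpow_le {X ι : Type*} [PseudoMetricSpace X]
    [MeasurableSpace X] [OpensMeasurableSpace X] {ω : Measure X} {T : Finset ι} {x : ι → X}
    {r : ι → ℝ≥0} {A P : Set X} {δ : ℝ≥0} (hA : IsCover δ A P) {u : ℝ} (hu : 0 ≤ u)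
    (hδ : ∀ i ∈ T, δ ≤ r i) (hP : ∀ p ∈ P, ∃ i ∈ T, p ∈ closedEBall (x i) (r i))
    (hω : ∀ i ∈ T, (r i : ℝ≥0∞) ^ u ≤ ω (closedEBall (x i) (r i))) :
    hausdorffContent u A ≤ 12 ^ u * ω univ := by
  simp only [closedEBall_coe] at hP hω
  obtain ⟨v, hvT, hdisj, hv⟩ := Vitali.exists_disjoint_subfamily_covering_enlargement_closedBall
    (T : Set ι) x (fun i => r i) (T.sup r : ℝ≥0)
    (fun i hi => NNReal.coe_le_coe.2 (Finset.le_sup hi)) 5 (by norm_num)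
  lift v to Finset ι using T.finite_toSet.subset hvT
  have hcover : A ⊆ ⋃ i ∈ v, closedEBall (x i) (6 * r i : ℝ≥0) := fun a ha => by
    obtain ⟨p, hp, hap⟩ := mem_iUnion₂.1 (isCover_iff_subset_iUnion_closedBall.1 hA ha)
    obtain ⟨i, hi, hpi⟩ := hP p hp
    obtain ⟨j, hj, hij⟩ := hv i hi
    refine mem_iUnion₂.2 ⟨j, hj, ?_⟩
    have hδj : (δ : ℝ) ≤ r j := hδ j (hvT hj)
    have hpj : dist p (x j) ≤ 5 * r j := hij hpi
    rw [closedEBall_coe, mem_closedBall]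
    calc
      dist a (x j) ≤ dist a p + dist p (x j) := dist_triangle _ _ _
      _ ≤ δ + 5 * r j := add_le_add hap hpj
      _ ≤ (6 * r j : ℝ≥0) := by push_cast; linarith
  calc
    hausdorffContent u A ≤ ∑ i ∈ v, hausdorffContent u (closedEBall (x i) (6 * r i : ℝ≥0)) :=
      (measure_mono hcover).trans (measure_biUnion_finset_le v _)
    _ ≤ ∑ i ∈ v, 12 ^ u * ω (closedBall (x i) (r i)) := Finset.sum_le_sum fun i hi => by
      refine (hausdorffContent_closedEBall_le hu _ _).trans ?_
      rw [show (2 * (6 * r i : ℝ≥0) : ℝ≥0∞) = 12 * r i by push_cast; ring,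
        ENNReal.mul_rpow_of_nonneg _ _ hu]
      gcongr
      exact hω i (hvT hi)
    _ ≤ 12 ^ u * ω univ := by
      rw [← Finset.mul_sum, ← measure_biUnion_finset hdisj fun _ _ => measurableSet_closedBall]
      gcongr
      exact subset_univ _

theorem exists_discrete_frostman_measure {X : Type*} [MetricSpace X] [MeasurableSpace X]
    [OpensMeasurableSpace X] {A : Set X} (hA : TotallyBounded A) {δ : ℝ≥0} (hδ : δ ≠ 0) {u : ℝ}
    (hu : 0 ≤ u) :
    ∃ ω : Measure X, IsFiniteMeasure ω ∧ (∀ᵐ x ∂ω, x ∈ A) ∧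
      (∀ x, ∀ r ≥ δ, ω (closedEBall x r) ≤ (2 * r) ^ u) ∧
      hausdorffContent u A ≤ 12 ^ u * ω univ := by
  obtain ⟨N, hNA, hN, hcover⟩ := exists_finite_isCover_of_totallyBounded hδ hA
  lift N to Finset X using hN
  -- Constrain every ball centred at a net point whose radius is a distance between net points.
  set ρ : X × X → ℝ≥0 := fun i => max δ (nndist i.1 i.2)
  obtain ⟨ω, hfin, hωN, hle, htight⟩ := exists_measure_le_and_forall_exists_eq N (N ×ˢ N)
    (B := fun i => closedEBall i.1 (ρ i)) (fun i => isClosed_closedEBall.measurableSet)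
    (c := fun i => (ρ i : ℝ≥0∞) ^ u) (fun i => by finiteness)
    (fun p hp => ⟨(p, p), by simpa using hp, mem_closedEBall_self⟩)
  refine ⟨ω, hfin, hωN.mono fun x hx => hNA hx, fun x r hr =>
    measure_closedEBall_le_of_forall_pair hωN hu (fun p hp q hq =>
      hle (p, q) (Finset.mk_mem_product hp hq)) x hr, ?_⟩
  classical
  refine hausdorffContent_le_of_isCover_of_rpow_le (ι := X × X) (x := Prod.fst) (r := ρ)
    (T := {i ∈ N ×ˢ N | ω (closedEBall i.1 (ρ i)) = (ρ i : ℝ≥0∞) ^ u})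
    hcover hu (fun i _ => le_max_left _ _) (fun p hp => ?_)
    fun i hi => (Finset.mem_filter.1 hi).2.ge
  obtain ⟨i, hi, hpi, heq⟩ := htight p hp
  exact ⟨i, Finset.mem_filter.2 ⟨hi, heq⟩, hpi⟩

end DiscreteFrostman

section BandCover

theorem addHaar_closedBall_sdiff_ball_le {W : Type*} [NormedAddCommGroup W] [NormedSpace ℝ W]
    [FiniteDimensional ℝ W] [Nontrivial W] [MeasurableSpace W] [BorelSpace W] (μ : Measure W)
    [μ.IsAddHaarMeasure] (x : W) {a b : ℝ} (ha : 0 ≤ a) (hab : a ≤ b) :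
    μ (closedBall x b \ ball x a) ≤ ENNReal.ofReal
      ((b - a) * Module.finrank ℝ W * b ^ (Module.finrank ℝ W - 1)) * μ (ball 0 1) := by
  have hsub : ball x a ⊆ closedBall x b := (ball_subset_ball hab).trans ball_subset_closedBall
  rw [measure_sdiff hsub measurableSet_ball.nullMeasurableSet measure_ball_lt_top.ne,
    Measure.addHaar_closedBall μ x (ha.trans hab), Measure.addHaar_ball μ x ha,
    ← ENNReal.sub_mul (by finiteness), ← ENNReal.ofReal_sub _ (by positivity)]
  gcongr
  simpa [abs_of_nonneg ha, abs_of_nonneg (ha.trans hab), abs_of_nonneg (sub_nonneg.2 hab), hab]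
    using (le_abs_self _).trans (abs_pow_sub_pow_le b a (Module.finrank ℝ W))

theorem addHaar_thickened_shell_le {W : Type*} [NormedAddCommGroup W] [NormedSpace ℝ W]
    [FiniteDimensional ℝ W] [MeasurableSpace W] [BorelSpace W] (μ : Measure W)
    [μ.IsAddHaarMeasure] {d : ℕ} (hd : Module.finrank ℝ W = d + 1) {ρ : ℝ≥0} (hρ : ρ ≤ 1) :
    μ (closedBall 0 (1 + ρ) \ ball 0 (max 0 (1 - 2 * ρ))) ≤
      3 * (d + 1) * 2 ^ d * ρ * μ (ball 0 1) := by
  have : Nontrivial W := Module.nontrivial_of_finrank_eq_succ hd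
  have : (ρ : ℝ) ≤ 1 := hρ
  have : (0 : ℝ) ≤ ρ := ρ.2
  set a : ℝ := max 0 (1 - 2 * ρ)
  have hab : a ≤ 1 + ρ := max_le (by positivity) (by linarith)
  have hthick : 1 + ρ - a ≤ 3 * ρ := by linarith [le_max_right 0 (1 - 2 * (ρ : ℝ))]
  refine (addHaar_closedBall_sdiff_ball_le μ 0 (le_max_left _ _) hab).trans
    (mul_le_mul_left (ENNReal.ofReal_le_of_le_toReal ?_) _)
  calc
    (1 + ρ - a) * Module.finrank ℝ W * (1 + ρ) ^ (Module.finrank ℝ W - 1)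
      ≤ 3 * ρ * (d + 1) * 2 ^ d := by
        rw [hd, Nat.add_sub_cancel]; push_cast; gcongr; linarith
    _ = (3 * (d + 1) * 2 ^ d * ρ : ℝ≥0∞).toReal := by
      rw [show (3 * (d + 1) * 2 ^ d * ρ : ℝ≥0∞) = (3 * (d + 1) * 2 ^ d * ρ : ℝ≥0) by push_cast; rfl,
        ENNReal.coe_toReal]
      push_cast; ring

theorem exists_isCover_shell {W : Type*} [NormedAddCommGroup W] [NormedSpace ℝ W]
    [FiniteDimensional ℝ W] {d : ℕ} (hd : Module.finrank ℝ W = d + 1) {ρ : ℝ≥0} (hρ : ρ ≠ 0)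
    (hρ1 : ρ ≤ 1) :
    ∃ N : Finset W, IsCover (2 * ρ) {x : W | 1 - (ρ : ℝ) ≤ ‖x‖ ∧ ‖x‖ ≤ 1} N ∧
      (N.card * ρ ^ d : ℝ≥0∞) ≤ 3 * (d + 1) * 2 ^ d := by
  borelize W
  set μ : Measure W := Measure.addHaar
  set a : ℝ := max 0 (1 - 2 * ρ)
  set S : Set W := closedBall 0 (1 + ρ) \ ball 0 a
  have hρ0 : (0 : ℝ) < ρ := by positivity
  have : (ρ : ℝ) ≤ 1 := hρ1
  have hball {x : W} (hx : 1 - (ρ : ℝ) ≤ ‖x‖ ∧ ‖x‖ ≤ 1) : closedEBall x ρ ⊆ S := by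
    intro y hy
    rw [closedEBall_coe, mem_closedBall_iff_norm] at hy
    have h₁ := norm_le_norm_add_norm_sub' y x
    have h₂ := norm_le_norm_add_norm_sub y x
    refine ⟨mem_closedBall_zero_iff.2 (by linarith), fun hya => ?_⟩
    rw [mem_ball_zero_iff, lt_max_iff] at hya
    exact hya.elim (norm_nonneg y).not_gt fun h => by linarith [hx.1]
  have hSfin : μ S ≠ ∞ := measure_ne_top_of_subset sdiff_subset measure_closedBall_lt_top.ne
  have : IsFiniteMeasure (μ.restrict S) := ⟨by simpa using hSfin.lt_top⟩
  have hV0 : μ (ball 0 1) ≠ 0 := (measure_ball_pos μ 0 one_pos).ne'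
  have hV : μ (ball 0 1) ≠ ∞ := measure_ball_lt_top.ne
  obtain ⟨N, hN, hcard⟩ := exists_isCover_card_mul_le_measure_univ (μ := μ.restrict S)
    (A := {x : W | 1 - (ρ : ℝ) ≤ ‖x‖ ∧ ‖x‖ ≤ 1}) (c := ρ ^ (d + 1) * μ (ball 0 1)) (r := ρ)
    (mul_ne_zero (by simp [hρ]) hV0) fun x hx => by
      rw [Measure.restrict_eq_self _ (hball hx), closedEBall_coe,
        Measure.addHaar_closedBall μ x hρ0.le, hd, ENNReal.ofReal_pow hρ0.le,
        ENNReal.ofReal_coe_nnreal]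
  refine ⟨N, hN, ?_⟩
  rw [Measure.restrict_apply_univ] at hcard
  have hvol := hcard.trans (addHaar_thickened_shell_le μ hd hρ1)
  rwa [← mul_assoc, ENNReal.mul_le_mul_iff_left hV0 hV, pow_succ, ← mul_assoc,
    ENNReal.mul_le_mul_iff_left (by simpa) (by simp)] at hvol

theorem exists_isCover_band {V : Type*} [NormedAddCommGroup V] [InnerProductSpace ℝ V]
    [FiniteDimensional ℝ V] {d : ℕ} (hd : Module.finrank ℝ V = d + 2) {z : V} (hz : ‖z‖ = 1)
    {ρ : ℝ≥0} (hρ : ρ ≠ 0) (hρ1 : ρ ≤ 1) :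
    ∃ N : Finset V, IsCover (3 * ρ) {e : V | ‖e‖ = 1 ∧ ‖⟪z, e⟫‖ ≤ ρ} N ∧
      (N.card * ρ ^ d : ℝ≥0∞) ≤ 3 * (d + 1) * 2 ^ d := by
  classical
  have : Fact (Module.finrank ℝ V = d + 1 + 1) := ⟨hd⟩
  set W : Submodule ℝ V := (ℝ ∙ z)ᗮ
  have hW : Module.finrank ℝ W = d + 1 :=
    Submodule.finrank_orthogonal_span_singleton (norm_ne_zero_iff.1 (by simp [hz]))
  obtain ⟨N, hN, hcard⟩ := exists_isCover_shell hW hρ hρ1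
  refine ⟨N.image (↑), fun e ⟨he, hze⟩ => ?_,
    le_trans (by gcongr; exact Finset.card_image_le) hcard⟩
  have hdist : ‖e - W.starProjection e‖ ≤ ρ := by
    rw [Submodule.starProjection_orthogonal_val, sub_sub_cancel,
      Submodule.starProjection_unit_singleton ℝ hz, norm_smul, hz, mul_one]
    exact hze
  have hshell : W.orthogonalProjectionOnto e ∈ {x : W | 1 - (ρ : ℝ) ≤ ‖x‖ ∧ ‖x‖ ≤ 1} := by
    have h₁ := W.norm_orthogonalProjectionOnto_apply_le e
    have h₂ := norm_le_norm_add_norm_sub' e (W.starProjection e)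
    rw [he] at h₁ h₂
    refine ⟨?_, h₁⟩
    simp only [Submodule.coe_norm, Submodule.coe_orthogonalProjectionOnto_apply,
      tsub_le_iff_right] at h₂ ⊢
    linarith
  obtain ⟨x, hxN, hx⟩ := hN hshell
  refine ⟨x, by simpa using hxN, ?_⟩
  have hx' : edist (W.starProjection e) x ≤ (2 * ρ : ℝ≥0) := hx
  have hdist' : edist e (W.starProjection e) ≤ ρ := by
    rw [edist_eq_enorm_sub, enorm_le_coe]; exact hdist
  calc
    edist e x ≤ edist e (W.starProjection e) + edist (W.starProjection e) x := edist_triangle _ _ _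
    _ ≤ ρ + (2 * ρ : ℝ≥0) := add_le_add hdist' hx'
    _ = (3 * ρ : ℝ≥0) := by push_cast; ring

end BandCover

section BandEstimate

variable {V : Type*} [NormedAddCommGroup V] [InnerProductSpace ℝ V] [FiniteDimensional ℝ V]
  [MeasurableSpace V] {d : ℕ}

/-- The constant in the band estimate: a band of width `ρ` around a great subsphere of the unit
sphere is covered by at most `3 (d + 1) 2ᵈ ρ⁻ᵈ` balls of diameter `6 ρ`, each of measure at most
`(6 ρ) ^ (d + σ)`. -/
noncomputable def bandConstant (d : ℕ) (σ : ℝ) : ℝ≥0∞ :=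
  3 * (d + 1) * 2 ^ d * 6 ^ (d + σ)

theorem bandConstant_ne_top {σ : ℝ} (hσ : 0 ≤ σ) : bandConstant d σ ≠ ∞ := by
  unfold bandConstant; finiteness

theorem bandConstant_ne_zero (σ : ℝ) : bandConstant d σ ≠ 0 := by
  simp [bandConstant]

theorem measure_unit_band_le (hd : Module.finrank ℝ V = d + 2) {ω : Measure V} {σ : ℝ}
    (hσ : 0 ≤ σ) {z : V} (hz : ‖z‖ = 1) {ρ : ℝ≥0} (hρ : ρ ≠ 0) (hρ1 : ρ ≤ 1)
    (hω : ∀ x, ω (closedEBall x (3 * ρ : ℝ≥0)) ≤ (2 * (3 * ρ : ℝ≥0)) ^ (d + σ)) :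
    ω {e | ‖e‖ = 1 ∧ ‖⟪z, e⟫‖ ≤ ρ} ≤ bandConstant d σ * ρ ^ σ := by
  obtain ⟨N, hN, hcard⟩ := exists_isCover_band hd hz hρ hρ1
  have hpow : (2 * (3 * ρ : ℝ≥0) : ℝ≥0∞) ^ (d + σ) = 6 ^ (d + σ) * (ρ ^ d * ρ ^ σ) := by
    rw [show (2 * (3 * ρ : ℝ≥0) : ℝ≥0∞) = 6 * ρ by push_cast; ring,
      ENNReal.mul_rpow_of_nonneg _ _ (by positivity), ENNReal.rpow_add (x := (ρ : ℝ≥0∞)) _ _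
        (by simpa) (by simp), ENNReal.rpow_natCast]
  calc
    ω {e | ‖e‖ = 1 ∧ ‖⟪z, e⟫‖ ≤ ρ} ≤ ∑ x ∈ N, ω (closedEBall x (3 * ρ : ℝ≥0)) :=
      (measure_mono (isCover_iff_subset_iUnion_closedEBall.1 hN)).trans
        (measure_biUnion_finset_le N _)
    _ ≤ N.card * (6 ^ (d + σ) * (ρ ^ d * ρ ^ σ)) := by
      rw [← nsmul_eq_mul, ← hpow]; exact Finset.sum_le_card_nsmul _ _ _ fun x _ => hω x
    _ = N.card * ρ ^ d * 6 ^ (d + σ) * ρ ^ σ := by ring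
    _ ≤ bandConstant d σ * ρ ^ σ := by unfold bandConstant; gcongr

theorem measure_band_le (hd : Module.finrank ℝ V = d + 2) {ω : Measure V}
    (hsphere : ∀ᵐ e ∂ω, ‖e‖ = 1) {σ : ℝ} (hσ : 0 < σ) {δ : ℝ≥0} (hδ : δ ≠ 0) (hδ1 : δ ≤ 1)
    (hω : ∀ x, ∀ r ≥ δ, ω (closedEBall x r) ≤ (2 * r) ^ (d + σ)) (z : V) :
    ω {e | ‖⟪z, e⟫‖ₑ ≤ δ} ≤ bandConstant d σ * (δ ^ σ * (1 + ‖z‖ₑ ^ (-σ))) := by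
  rcases eq_or_ne z 0 with rfl | hz
  · simp [ENNReal.zero_rpow_of_neg, hσ, hδ, bandConstant_ne_zero σ, ENNReal.mul_top]
  set ρ : ℝ≥0 := min 1 (max δ (δ / ‖z‖₊))
  have hδρ : δ ≤ ρ := le_min hδ1 (le_max_left _ _)
  have hρσ : (ρ : ℝ≥0∞) ^ σ ≤ δ ^ σ * (1 + ‖z‖ₑ ^ (-σ)) := by
    calc
      (ρ : ℝ≥0∞) ^ σ ≤ (max δ (δ / ‖z‖₊) : ℝ≥0) ^ σ := by gcongr; exact min_le_right _ _
      _ ≤ δ ^ σ + (δ / ‖z‖₊ : ℝ≥0) ^ σ := by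
        rw [ENNReal.coe_max, (ENNReal.monotone_rpow_of_nonneg hσ.le).map_max]
        exact max_le_add_of_nonneg zero_le zero_le
      _ = δ ^ σ * (1 + ‖z‖ₑ ^ (-σ)) := by
        rw [ENNReal.coe_div (by simpa), ENNReal.div_rpow_of_nonneg _ _ hσ.le, ENNReal.rpow_neg,
          mul_add, mul_one, div_eq_mul_inv]; rfl
  have hband : ∀ᵐ e ∂ω, e ∈ {e | ‖⟪z, e⟫‖ₑ ≤ δ} → e ∈ {e | ‖e‖ = 1 ∧ ‖⟪‖z‖⁻¹ • z, e⟫‖ ≤ ρ} := by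
    filter_upwards [hsphere] with e he hze
    have hinner : ‖⟪z, e⟫‖ ≤ δ := enorm_le_coe.1 hze
    have hcs : ‖⟪z, e⟫‖ ≤ ‖z‖ := by simpa [he] using norm_inner_le_norm (𝕜 := ℝ) z e
    refine ⟨he, ?_⟩
    calc
      ‖⟪‖z‖⁻¹ • z, e⟫‖ = ‖⟪z, e⟫‖ / ‖z‖ := by
        rw [real_inner_smul_left, norm_mul, norm_inv, norm_norm, inv_mul_eq_div]
      _ ≤ min 1 (δ / ‖z‖) :=
        le_min (div_le_one_of_le₀ hcs (norm_nonneg z)) (by gcongr)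
      _ ≤ ρ := by
        exact_mod_cast min_le_min_left 1 (le_max_right δ (δ / ‖z‖₊))
  calc
    ω {e | ‖⟪z, e⟫‖ₑ ≤ δ} ≤ ω {e | ‖e‖ = 1 ∧ ‖⟪‖z‖⁻¹ • z, e⟫‖ ≤ ρ} := measure_mono_ae hband
    _ ≤ bandConstant d σ * ρ ^ σ :=
      measure_unit_band_le hd hσ.le (norm_smul_inv_norm hz) (hδ.bot_lt.trans_le hδρ).ne'
        (min_le_left _ _) fun x => hω x _ (hδρ.trans (le_mul_of_one_le_left' (by norm_num)))
    _ ≤ bandConstant d σ * (δ ^ σ * (1 + ‖z‖ₑ ^ (-σ))) := by gcongr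

end BandEstimate

section HeavyStrips

variable {V : Type*} [NormedAddCommGroup V] [InnerProductSpace ℝ V] [FiniteDimensional ℝ V]
  [MeasurableSpace V] [BorelSpace V] {d : ℕ}

theorem mul_hausdorffContent_le_of_le_measure_strip (hd : Module.finrank ℝ V = d + 2)
    {lam : Measure V} [SFinite lam] {σ : ℝ} (hσ : 0 < σ) {δ : ℝ≥0} (hδ : δ ≠ 0) (hδ1 : δ ≤ 1)
    {A : Set V} (hA : A ⊆ sphere 0 1) {a : ℝ≥0∞}
    (ha : ∀ e ∈ A, a ≤ lam {z | ‖⟪z, e⟫‖ₑ ≤ δ}) :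
    a * hausdorffContent (d + σ) A ≤
      12 ^ (d + σ) * bandConstant d σ * δ ^ σ * ∫⁻ z, (1 + ‖z‖ₑ ^ (-σ)) ∂lam := by
  obtain ⟨ω, _, hωA, hω, hcontent⟩ := exists_discrete_frostman_measure
    ((isCompact_sphere (0 : V) 1).totallyBounded.subset hA) hδ (u := d + σ) (by positivity)
  have hsphere : ∀ᵐ e ∂ω, ‖e‖ = 1 := hωA.mono fun e he => mem_sphere_zero_iff_norm.1 (hA he)
  have hmeas : MeasurableSet {p : V × V | ‖⟪p.2, p.1⟫‖ₑ ≤ δ} :=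
    measurableSet_le (by fun_prop) measurable_const
  have hdouble : a * ω univ ≤
      bandConstant d σ * (δ ^ σ * ∫⁻ z, (1 + ‖z‖ₑ ^ (-σ)) ∂lam) :=
    calc
      a * ω univ = ∫⁻ _, a ∂ω := (lintegral_const a).symm
      _ ≤ ∫⁻ e, lam {z | ‖⟪z, e⟫‖ₑ ≤ δ} ∂ω := lintegral_mono_ae (hωA.mono ha)
      _ = ∫⁻ z, ω {e | ‖⟪z, e⟫‖ₑ ≤ δ} ∂lam :=
        (Measure.prod_apply hmeas).symm.trans (Measure.prod_apply_symm hmeas)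
      _ ≤ ∫⁻ z, bandConstant d σ * (δ ^ σ * (1 + ‖z‖ₑ ^ (-σ))) ∂lam :=
        lintegral_mono (measure_band_le hd hsphere hσ hδ hδ1 hω)
      _ = _ := by
        rw [lintegral_const_mul _ (by fun_prop), lintegral_const_mul _ (by fun_prop)]
  calc
    a * hausdorffContent (d + σ) A ≤ a * (12 ^ (d + σ) * ω univ) := by gcongr
    _ = 12 ^ (d + σ) * (a * ω univ) := by ring
    _ ≤ 12 ^ (d + σ) * (bandConstant d σ * (δ ^ σ * ∫⁻ z, (1 + ‖z‖ₑ ^ (-σ)) ∂lam)) := by gcongr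
    _ = _ := by ring

end HeavyStrips

section RieszEnergy

theorem rpow_neg_le_tsum_dyadic {σ : ℝ} (hσ : 0 < σ) (m : ℕ) (a : ℝ≥0∞) :
    a ^ (-σ) ≤ (2⁻¹ ^ m) ^ (-σ) +
      ∑' k : ℕ, 2 ^ σ * (2⁻¹ ^ (m + k)) ^ (-σ) * indicator (Iic (2⁻¹ ^ (m + k))) 1 a := by
  have hanti {b c : ℝ≥0∞} (h : b ≤ c) : c ^ (-σ) ≤ b ^ (-σ) := by
    simpa only [ENNReal.rpow_neg, ENNReal.inv_le_inv] using ENNReal.rpow_le_rpow h hσ.le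
  rcases lt_or_ge (2⁻¹ ^ m) a with ham | ham
  · exact (hanti ham.le).trans le_self_add
  refine le_add_left ?_
  rcases eq_or_ne a 0 with rfl | ha
  · have hone (k : ℕ) : (1 : ℝ≥0∞) ≤ 2 ^ σ * (2⁻¹ ^ (m + k)) ^ (-σ) :=
      one_le_mul (ENNReal.one_le_rpow one_le_two hσ)
        ((ENNReal.one_rpow _).symm.trans_le (hanti (pow_le_one₀ zero_le (by simp))))
    calc
      (0 : ℝ≥0∞) ^ (-σ) ≤ ∑' _ : ℕ, 1 := by
        rw [ENNReal.tsum_const_eq_top_of_ne_zero one_ne_zero]; exact le_top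
      _ ≤ _ := ENNReal.tsum_le_tsum fun k => by simpa using hone k
  have hex : ∃ k, (2⁻¹ : ℝ≥0∞) ^ (m + k + 1) < a := by
    obtain ⟨n, hn⟩ := ENNReal.exists_inv_two_pow_lt ha
    exact ⟨n, (pow_le_pow_of_le_one zero_le (by simp) (by omega)).trans_lt hn⟩
  classical
  obtain ⟨k, hk, hak⟩ : ∃ k, (2⁻¹ : ℝ≥0∞) ^ (m + k + 1) < a ∧ a ≤ 2⁻¹ ^ (m + k) := by
    refine ⟨Nat.find hex, Nat.find_spec hex, ?_⟩
    rcases h : Nat.find hex with _ | j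
    · exact ham
    · exact not_lt.1 (Nat.find_min hex (h ▸ Nat.lt_succ_self j))
  calc
    a ^ (-σ) ≤ (2⁻¹ * 2⁻¹ ^ (m + k)) ^ (-σ) := hanti (by rw [← pow_succ']; exact hk.le)
    _ = 2 ^ σ * (2⁻¹ ^ (m + k)) ^ (-σ) * indicator (Iic (2⁻¹ ^ (m + k))) 1 a := by
      rw [indicator_of_mem (mem_Iic.2 hak), ENNReal.mul_rpow_of_ne_top (by simp) (by finiteness),
        ENNReal.inv_rpow, ENNReal.rpow_neg, inv_inv, Pi.one_apply, mul_one]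
    _ ≤ _ := ENNReal.le_tsum k

theorem lintegral_rpow_neg_le_of_measure_le {X : Type*} [MeasurableSpace X] {μ : Measure X}
    {g : X → ℝ≥0∞} (hg : Measurable g) {σ s : ℝ} (hσ : 0 < σ) {m : ℕ}
    (h : ∀ k ≥ m, μ {x | g x ≤ 2⁻¹ ^ k} ≤ (2⁻¹ ^ k) ^ s) :
    ∫⁻ x, g x ^ (-σ) ∂μ ≤
      (2⁻¹ ^ m) ^ (-σ) * μ univ + 2 ^ σ * ∑' k : ℕ, (2⁻¹ ^ k) ^ (s - σ) := by
  have hind (k : ℕ) : Measurable fun x => indicator (Iic (2⁻¹ ^ (m + k))) (1 : ℝ≥0∞ → ℝ≥0∞) (g x) :=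
    (measurable_one.indicator measurableSet_Iic).comp hg
  have hterm (k : ℕ) : ∫⁻ x, 2 ^ σ * (2⁻¹ ^ (m + k)) ^ (-σ) *
      indicator (Iic (2⁻¹ ^ (m + k))) 1 (g x) ∂μ ≤ 2 ^ σ * (2⁻¹ ^ (m + k)) ^ (s - σ) := by
    rw [lintegral_const_mul _ (hind k), show (fun x => indicator (Iic (2⁻¹ ^ (m + k))) 1 (g x)) =
      indicator {x | g x ≤ 2⁻¹ ^ (m + k)} (1 : X → ℝ≥0∞) from rfl,
      lintegral_indicator_one (measurableSet_le hg measurable_const), mul_assoc, sub_eq_neg_add,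
      ENNReal.rpow_add _ _ (by simp) (by finiteness)]
    gcongr
    exact h _ (Nat.le_add_right m k)
  calc
    ∫⁻ x, g x ^ (-σ) ∂μ
      ≤ ∫⁻ x, ((2⁻¹ ^ m) ^ (-σ) + ∑' k : ℕ, 2 ^ σ * (2⁻¹ ^ (m + k)) ^ (-σ) *
          indicator (Iic (2⁻¹ ^ (m + k))) 1 (g x)) ∂μ :=
        lintegral_mono fun x => rpow_neg_le_tsum_dyadic hσ m (g x)
    _ = (2⁻¹ ^ m) ^ (-σ) * μ univ + ∑' k : ℕ, ∫⁻ x, 2 ^ σ * (2⁻¹ ^ (m + k)) ^ (-σ) *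
          indicator (Iic (2⁻¹ ^ (m + k))) 1 (g x) ∂μ := by
      rw [lintegral_add_left measurable_const, lintegral_const,
        lintegral_tsum fun k => ((hind k).const_mul _).aemeasurable]
    _ ≤ (2⁻¹ ^ m) ^ (-σ) * μ univ + 2 ^ σ * ∑' k : ℕ, (2⁻¹ ^ k) ^ (s - σ) := by
      rw [← ENNReal.tsum_mul_left]
      refine add_le_add le_rfl ?_
      exact (ENNReal.tsum_le_tsum hterm).trans (ENNReal.tsum_comp_le_tsum_of_injective
        (add_right_injective m) fun k => 2 ^ σ * (2⁻¹ ^ k) ^ (s - σ))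

end RieszEnergy

section Potentials

theorem lintegral_edist_rpow_neg_le_of_mem_frostmanSet {X : Type*} [PseudoEMetricSpace X]
    [MeasurableSpace X] [OpensMeasurableSpace X] {μ : Measure X} {s σ : ℝ} (hσ : 0 < σ) {m : ℕ}
    {x : X} (hx : x ∈ frostmanSet μ s m) :
    ∫⁻ y, edist y x ^ (-σ) ∂μ ≤
      (2⁻¹ ^ m) ^ (-σ) * μ univ + 2 ^ σ * ∑' k : ℕ, (2⁻¹ ^ k) ^ (s - σ) :=
  lintegral_rpow_neg_le_of_measure_le measurable_edist_left hσ hx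

theorem setLIntegral_lintegral_edist_rpow_neg_ne_top {X : Type*} [PseudoEMetricSpace X]
    [MeasurableSpace X] [OpensMeasurableSpace X] (μ : Measure X) [IsFiniteMeasure μ] {s σ : ℝ}
    (hσ : 0 < σ) (hσs : σ < s) (m : ℕ) :
    ∫⁻ x in frostmanSet μ s m, ∫⁻ y, edist y x ^ (-σ) ∂μ ∂μ ≠ ∞ := by
  have hsum := tsum_inv_two_pow_rpow_ne_top (sub_pos.2 hσs)
  have hpow : ((2⁻¹ : ℝ≥0∞) ^ m) ^ (-σ) ≠ ∞ :=
    ENNReal.rpow_ne_top_of_ne_zero (by simp) (by finiteness)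
  refine ne_top_of_le_ne_top ?_ (setLIntegral_mono measurable_const fun x hx =>
    lintegral_edist_rpow_neg_le_of_mem_frostmanSet hσ hx)
  rw [lintegral_const]
  finiteness

theorem hausdorffMeasure_ne_zero_of_measure_closedEBall_le {X : Type*} [EMetricSpace X]
    [MeasurableSpace X] [BorelSpace X] {ν : Measure X} {t : ℝ} {B : Set X} {c : ℝ≥0∞}
    (hc : c ≠ ∞) (h : ∀ x ∈ B, ∀ r ≠ ∞, ν (closedEBall x r) ≤ c * r ^ t) (hB : ν B ≠ 0) :
    μH[t] B ≠ 0 := by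
  have hle : c⁻¹ • ν.restrict B ≤ μH[t] := by
    refine Measure.le_hausdorffMeasure t _ 1 one_pos fun U hU => ?_
    rw [Measure.smul_apply, smul_eq_mul, mul_comm, ← div_eq_mul_inv]
    refine ENNReal.div_le_of_le_mul ?_
    calc
      ν.restrict B U ≤ ν.restrict B (closure U) := measure_mono subset_closure
      _ = ν (closure U ∩ B) := Measure.restrict_apply isClosed_closure.measurableSet
      _ ≤ ediam U ^ t * c := by
        rcases (closure U ∩ B).eq_empty_or_nonempty with hempty | ⟨x, hxU, hxB⟩
        · simp [hempty]
        · rw [mul_comm]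
          refine (measure_mono fun y hy => ?_).trans
            (h x hxB _ (ne_top_of_le_ne_top ENNReal.one_ne_top hU))
          exact (edist_le_ediam_of_mem hy.1 hxU).trans_eq (ediam_closure U)
  intro hzero
  have hB0 : c⁻¹ * ν B ≤ 0 := by
    calc
      c⁻¹ * ν B = (c⁻¹ • ν.restrict B) B := by
        rw [Measure.smul_apply, Measure.restrict_apply_self, smul_eq_mul]
      _ ≤ 0 := hzero ▸ hle B
  exact mul_ne_zero (ENNReal.inv_ne_zero.2 hc) hB (le_zero_iff.1 hB0)

theorem measure_closedEBall_le_lintegral_edist_rpow_neg_mul {X : Type*} [PseudoEMetricSpace X]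
    [MeasurableSpace X] [OpensMeasurableSpace X] {ν : Measure X} {t : ℝ} (ht : 0 ≤ t) {x : X}
    (hx : ∫⁻ y, edist y x ^ (-t) ∂ν ≠ ∞) {r : ℝ≥0∞} (hr : r ≠ ∞) :
    ν (closedEBall x r) ≤ (∫⁻ y, edist y x ^ (-t) ∂ν) * r ^ t := by
  refine (ENNReal.div_le_iff_le_mul (.inr hx) (.inl (by finiteness))).1 ?_
  rw [div_eq_mul_inv, mul_comm, ← ENNReal.rpow_neg]
  refine le_trans ?_ (mul_meas_ge_le_lintegral (measurable_edist_left.pow_const (-t)) (r ^ (-t)))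
  gcongr
  intro y hy
  simpa only [mem_ofPred_eq, ENNReal.rpow_neg, ENNReal.inv_le_inv] using
    ENNReal.rpow_le_rpow (mem_closedEBall.1 hy) ht

theorem hausdorffMeasure_ne_zero_of_lintegral_edist_rpow_neg_ne_top {X : Type*} [EMetricSpace X]
    [MeasurableSpace X] [BorelSpace X] {ν : Measure X} {t : ℝ} (ht : 0 ≤ t) {B : Set X}
    (h : ∀ x ∈ B, ∫⁻ y, edist y x ^ (-t) ∂ν ≠ ∞) (hB : ν B ≠ 0) : μH[t] B ≠ 0 := by
  set p : X → ℝ≥0∞ := fun x => ∫⁻ y, edist y x ^ (-t) ∂ν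
  have hunion : B ⊆ ⋃ m : ℕ, B ∩ {x | p x ≤ m} := fun x hx =>
    have ⟨m, hm⟩ := ENNReal.exists_nat_gt (h x hx)
    mem_iUnion.2 ⟨m, hx, hm.le⟩
  obtain ⟨m, hm⟩ : ∃ m : ℕ, ν (B ∩ {x | p x ≤ m}) ≠ 0 := by
    by_contra! hzero
    exact hB (measure_mono_null hunion (measure_iUnion_null hzero))
  have hpos := hausdorffMeasure_ne_zero_of_measure_closedEBall_le (t := t)
    (ENNReal.natCast_ne_top m) (fun x hx r hr =>
      (measure_closedEBall_le_lintegral_edist_rpow_neg_mul ht (h x hx.1) hr).trans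
        (mul_le_mul_left hx.2 (r ^ t))) hm
  exact fun hzero => hpos (measure_mono_null inter_subset_left hzero)

theorem hausdorffMeasure_image_ne_zero_of_ae_lintegral_edist_rpow_neg_ne_top {X Y : Type*}
    [MeasurableSpace X] [EMetricSpace Y] [MeasurableSpace Y] [BorelSpace Y] {μ : Measure X}
    {f : X → Y} (hf : Measurable f) {t : ℝ} (ht : 0 ≤ t)
    (h : ∀ᵐ x ∂μ, ∫⁻ y, edist (f y) (f x) ^ (-t) ∂μ ≠ ∞) {F : Set X} (hF : μ F ≠ 0) :
    μH[t] (f '' F) ≠ 0 := by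
  set G : Set X := {x | ∫⁻ y, edist (f y) (f x) ^ (-t) ∂μ ≠ ∞}
  have hFG : μ (F ∩ G) ≠ 0 := by
    rwa [measure_inter_conull' (measure_mono_null (fun x hx => hx.2) h)]
  have hmap : μ.map f (f '' (F ∩ G)) ≠ 0 := fun hzero =>
    hFG (measure_mono_null (subset_preimage_image f _)
      (le_zero_iff.1 ((Measure.le_map_apply hf.aemeasurable _).trans_eq hzero)))
  have hpot : ∀ z ∈ f '' (F ∩ G), ∫⁻ w, edist w z ^ (-t) ∂μ.map f ≠ ∞ := by
    rintro _ ⟨x, hx, rfl⟩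
    rw [lintegral_map (measurable_edist_left.pow_const _) hf]
    exact hx.2
  have hpos := hausdorffMeasure_ne_zero_of_lintegral_edist_rpow_neg_ne_top ht hpot hmap
  exact fun hzero => hpos (measure_mono_null (image_mono inter_subset_left) hzero)

end Potentials

section ExceptionalDirections

variable {V : Type*} [NormedAddCommGroup V] [InnerProductSpace ℝ V]

theorem dimH_image_inner_le {e : V} (he : ‖e‖ ≤ 1) (F : Set V) :
    dimH ((fun x => ⟪x, e⟫) '' F) ≤ dimH F := by
  have hlip : LipschitzWith 1 fun x : V => ⟪x, e⟫ := LipschitzWith.of_dist_le_mul fun x y => by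
    rw [Real.dist_eq, ← inner_sub_left, dist_eq_norm, NNReal.coe_one, one_mul]
    exact (abs_real_inner_le_norm (x - y) e).trans (mul_le_of_le_one_right (norm_nonneg _) he)
  exact hlip.dimH_image_le F

variable [MeasurableSpace V]

/-- The directions in which the projection of `μ` to a line has infinite `t`-potential at the
projections of a non-null set of points for `κ`. -/
def exceptionalDirections (κ μ : Measure V) (t : ℝ) : Set V :=
  {e ∈ sphere 0 1 | ¬ ∀ᵐ x ∂κ, ∫⁻ y, edist ⟪y, e⟫ ⟪x, e⟫ ^ (-t) ∂μ ≠ ∞}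

theorem exceptionalDirections_subset_sphere (κ μ : Measure V) (t : ℝ) :
    exceptionalDirections κ μ t ⊆ sphere 0 1 :=
  sep_subset _ _

theorem hausdorffMeasure_image_inner_ne_zero [BorelSpace V] {μ : Measure V}
    {t : ℝ} (ht : 0 ≤ t) {e : V} (he : e ∈ sphere (0 : V) 1)
    (hexc : e ∉ exceptionalDirections μ μ t) {F : Set V} (hF : μ F ≠ 0) :
    μH[t] ((fun x => ⟪x, e⟫) '' F) ≠ 0 :=
  hausdorffMeasure_image_ne_zero_of_ae_lintegral_edist_rpow_neg_ne_top
    (continuous_id.inner continuous_const).measurable ht (not_not.1 fun h => hexc ⟨he, h⟩) hF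

variable [FiniteDimensional ℝ V] [BorelSpace V] {d : ℕ}

theorem hausdorffMeasure_setOf_lintegral_inner_rpow_neg_eq_top_eq_zero
    (hd : Module.finrank ℝ V = d + 2) {lam : Measure V} [IsFiniteMeasure lam] {t σ : ℝ}
    (ht : 0 < t) (htσ : t < σ) (hlam : ∫⁻ z, ‖z‖ₑ ^ (-σ) ∂lam ≠ ∞) :
    μH[d + σ] {e ∈ sphere (0 : V) 1 | ∫⁻ z, ‖⟪z, e⟫‖ₑ ^ (-t) ∂lam = ∞} = 0 := by
  obtain ⟨t', htt', ht'σ⟩ := exists_between htσ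
  have hσ : 0 < σ := ht.trans htσ
  set A : ℕ → Set V := fun k =>
    {e ∈ sphere 0 1 | (2⁻¹ ^ k) ^ t' < lam {z | ‖⟪z, e⟫‖ₑ ≤ 2⁻¹ ^ k}}
  set C := 12 ^ (d + σ) * bandConstant d σ * ∫⁻ z, (1 + ‖z‖ₑ ^ (-σ)) ∂lam
  have hC : C ≠ ∞ := by
    have hint : ∫⁻ z, (1 + ‖z‖ₑ ^ (-σ)) ∂lam ≠ ∞ := by
      rw [lintegral_add_left measurable_const, lintegral_one]
      finiteness
    have := bandConstant_ne_top (d := d) hσ.le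
    finiteness
  have hcontent (k : ℕ) :
      (2⁻¹ ^ k) ^ t' * hausdorffContent (d + σ) (A k) ≤ C * (2⁻¹ ^ k) ^ σ := by
    have hcoe : ((2⁻¹ ^ k : ℝ≥0) : ℝ≥0∞) = 2⁻¹ ^ k := by
      rw [ENNReal.coe_pow, ENNReal.coe_inv_two]
    have h := mul_hausdorffContent_le_of_le_measure_strip hd (lam := lam) hσ (A := A k)
      (δ := 2⁻¹ ^ k) (by simp) (pow_le_one₀ zero_le (by norm_num)) (sep_subset _ _)
      (a := (2⁻¹ ^ k) ^ t') (fun e he => by rw [hcoe]; exact he.2.le)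
    rw [hcoe] at h
    exact h.trans_eq (mul_right_comm _ _ _)
  refine measure_mono_null (fun e he => ?_)
    (hausdorffMeasure_setOf_frequently_eq_zero (by positivity) ht'σ hC hcontent)
  by_contra hfreq
  obtain ⟨m, hm⟩ := eventually_atTop.1 (not_frequently.1 hfreq)
  have hstrip (k : ℕ) (hk : m ≤ k) : lam {z | ‖⟪z, e⟫‖ₑ ≤ 2⁻¹ ^ k} ≤ (2⁻¹ ^ k) ^ t' :=
    not_lt.1 fun hlt => hm k hk ⟨he.1, hlt⟩
  refine ne_top_of_le_ne_top ?_ (lintegral_rpow_neg_le_of_measure_le (by fun_prop) ht hstrip) he.2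
  have hsum := tsum_inv_two_pow_rpow_ne_top (sub_pos.2 htt')
  have hpow : ((2⁻¹ : ℝ≥0∞) ^ m) ^ (-t) ≠ ∞ :=
    ENNReal.rpow_ne_top_of_ne_zero (by simp) (by finiteness)
  finiteness

theorem hausdorffMeasure_exceptionalDirections_eq_zero_of_lintegral_ne_top
    (hd : Module.finrank ℝ V = d + 2) {κ μ : Measure V} [IsFiniteMeasure κ] [IsFiniteMeasure μ]
    {t σ : ℝ} (ht : 0 < t) (htσ : t < σ) (henergy : ∫⁻ x, ∫⁻ y, edist y x ^ (-σ) ∂μ ∂κ ≠ ∞) :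
    μH[d + σ] (exceptionalDirections κ μ t) = 0 := by
  set lam : Measure V := (κ.prod μ).map fun p => p.2 - p.1
  have hsub : Measurable fun p : V × V => p.2 - p.1 := measurable_snd.sub measurable_fst
  have hlintegral {g : V → ℝ≥0∞} (hg : Measurable g) :
      ∫⁻ z, g z ∂lam = ∫⁻ x, ∫⁻ y, g (y - x) ∂μ ∂κ := by
    rw [lintegral_map hg hsub]
    exact lintegral_prod _ (hg.comp hsub).aemeasurable
  have hlam : ∫⁻ z, ‖z‖ₑ ^ (-σ) ∂lam ≠ ∞ := by
    rw [hlintegral (by fun_prop)]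
    simpa only [edist_eq_enorm_sub] using henergy
  refine measure_mono_null (fun e he => And.intro he.1 ?_)
    (hausdorffMeasure_setOf_lintegral_inner_rpow_neg_eq_top_eq_zero hd ht htσ hlam)
  by_contra hfin
  have hmeas : Measurable fun z : V => ‖⟪z, e⟫‖ₑ ^ (-t) := by fun_prop
  rw [hlintegral hmeas] at hfin
  have hinner : Measurable fun x => ∫⁻ y, ‖⟪y - x, e⟫‖ₑ ^ (-t) ∂μ :=
    (hmeas.comp hsub).lintegral_prod_right'
  refine he.2 ((ae_lt_top hinner hfin).mono fun x hx => ?_)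
  simpa only [edist_eq_enorm_sub, ← inner_sub_left] using hx.ne

theorem hausdorffMeasure_exceptionalDirections_eq_zero
    (hd : Module.finrank ℝ V = d + 2) {μ : Measure V} [IsFiniteMeasure μ] {t σ s : ℝ}
    (hμ : μ ≪ μH[s]) (ht : 0 < t) (htσ : t < σ) (hσs : σ < s) :
    μH[d + σ] (exceptionalDirections μ μ t) = 0 := by
  obtain ⟨s', hσs', hs's⟩ := exists_between hσs
  have hnull (m : ℕ) :
      μH[d + σ] (exceptionalDirections (μ.restrict (frostmanSet μ s' m)) μ t) = 0 :=
    hausdorffMeasure_exceptionalDirections_eq_zero_of_lintegral_ne_top hd ht htσ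
      (setLIntegral_lintegral_edist_rpow_neg_ne_top μ (ht.trans htσ) hσs' m)
  refine measure_mono_null (fun e he => ?_) (measure_iUnion_null hnull)
  by_contra hexc
  have hfrostman : ∀ᵐ x ∂μ, x ∈ ⋃ m, frostmanSet μ s' m :=
    hμ (hausdorffMeasure_compl_iUnion_frostmanSet_eq_zero μ
      ((ht.trans htσ).trans hσs) hs's)
  have hae (m : ℕ) : ∀ᵐ x ∂μ.restrict (frostmanSet μ s' m),
      ∫⁻ y, edist ⟪y, e⟫ ⟪x, e⟫ ^ (-t) ∂μ ≠ ∞ :=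
    not_not.1 fun h => hexc (mem_iUnion.2 ⟨m, he.1, h⟩)
  refine he.2 ?_
  filter_upwards [hfrostman, ae_all_iff.2 fun m =>
    (ae_restrict_iff' (measurableSet_frostmanSet μ s' m)).1 (hae m)] with x hx hxm
  obtain ⟨m, hm⟩ := mem_iUnion.1 hx
  exact hxm m hm

theorem dimH_exceptionalDirections_le (hd : Module.finrank ℝ V = d + 2) {μ : Measure V}
    [IsFiniteMeasure μ] {t s : ℝ} (hμ : μ ≪ μH[s]) (ht : 0 < t) (hts : t < s) :
    dimH (exceptionalDirections μ μ t) ≤ d + ENNReal.ofReal s := by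
  obtain ⟨σ, htσ, hσs⟩ := exists_between hts
  have hσ : 0 ≤ σ := (ht.trans htσ).le
  have hzero := hausdorffMeasure_exceptionalDirections_eq_zero hd hμ ht htσ hσs
  have hcoe : (((d : ℝ≥0) + σ.toNNReal : ℝ≥0) : ℝ) = d + σ := by simp [hσ]
  calc
    dimH (exceptionalDirections μ μ t) ≤ ((d : ℝ≥0) + σ.toNNReal : ℝ≥0) :=
      dimH_le_of_hausdorffMeasure_ne_top (by rw [hcoe, hzero]; exact ENNReal.zero_ne_top)
    _ = d + ENNReal.ofReal σ := by push_cast; rfl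
    _ ≤ d + ENNReal.ofReal s := by gcongr

theorem exists_dimH_le_forall_le_dimH_image_inner (hd : Module.finrank ℝ V = d + 2)
    (μ : Measure V) [SFinite μ] {s : ℝ} (hμ : μ ≪ μH[s]) (hs : 0 < s) :
    ∃ X ⊆ sphere (0 : V) 1, dimH X ≤ d + ENNReal.ofReal s ∧
      ∀ e ∈ sphere (0 : V) 1, e ∉ X → ∀ F, μ F ≠ 0 →
        ENNReal.ofReal s ≤ dimH ((fun x => ⟪x, e⟫) '' F) := by
  obtain ⟨t, -, ht, htlim⟩ := exists_seq_strictMono_tendsto' hs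
  have htoFinite : μ.toFinite ≪ μH[s] := (toFinite_absolutelyContinuous μ).trans hμ
  refine ⟨⋃ j, exceptionalDirections μ.toFinite μ.toFinite (t j),
    iUnion_subset fun j => exceptionalDirections_subset_sphere _ _ _, ?_, fun e he hexc F hF => ?_⟩
  · rw [dimH_iUnion]
    exact iSup_le fun j => dimH_exceptionalDirections_le hd htoFinite (ht j).1 (ht j).2
  · refine le_of_tendsto' (ENNReal.tendsto_ofReal htlim) fun j =>
      le_dimH_of_hausdorffMeasure_ne_zero ?_
    rw [Real.coe_toNNReal _ (ht j).1.le]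
    exact hausdorffMeasure_image_inner_ne_zero (ht j).1.le he
      (fun h => hexc (mem_iUnion.2 ⟨j, h⟩)) fun hzero => hF (absolutelyContinuous_toFinite μ hzero)

theorem strong_line_projection_dimension_general (hd : Module.finrank ℝ V = d + 2) {s : ℝ}
    (hs : 0 < s) {E : Set V} [SFinite ((μH[s] : Measure V).restrict E)]
    (hE : dimH E ≤ ENNReal.ofReal s) :
    ∃ X ⊆ sphere (0 : V) 1, dimH X ≤ d + ENNReal.ofReal s ∧
      ∀ e ∈ sphere (0 : V) 1, e ∉ X → ∀ F ⊆ E, μH[s] F ≠ 0 →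
        dimH ((fun x => ⟪x, e⟫) '' F) = ENNReal.ofReal s := by
  obtain ⟨X, hX, hdimX, hlower⟩ := exists_dimH_le_forall_le_dimH_image_inner hd
    ((μH[s] : Measure V).restrict E) Measure.restrict_le_self.absolutelyContinuous hs
  refine ⟨X, hX, hdimX, fun e he heX F hFE hF => le_antisymm ?_ (hlower e he heX F ?_)⟩
  · exact (dimH_image_inner_le (mem_sphere_zero_iff_norm.1 he).le F).trans
      ((dimH_mono hFE).trans hE)
  · refine ne_bot_of_le_ne_bot hF ?_
    simpa [inter_eq_left.2 hFE] using Measure.le_restrict_apply (μ := μH[s]) E F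

end ExceptionalDirections

end

/-- **Strong projection theorem with exceptional-set dimension bound, case `m = 1`, `s ≤ 1`.**
If `E ⊆ ℝⁿ` is `𝓗ˢ`-measurable with `0 < 𝓗ˢ(E) < ∞` where `0 < s = dim_H E ≤ 1`, then there
is a set `X` of unit vectors with `dim_H X ≤ (n−2) + s` such that for every unit vector
`e ∉ X` and every `𝓗ˢ`-measurable `F ⊆ E` with `𝓗ˢ(F) > 0`, the set `{⟨x,e⟩ : x ∈ F}` has
Hausdorff dimension `s`. -/
theorem strong_line_projection_dimension (n : ℕ) (hn : 2 ≤ n) (s : ℝ)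
    (hs0 : 0 < s) (hs1 : s ≤ 1) (E : Set (EuclideanSpace ℝ (Fin n)))
    (hdimE : dimH E = ENNReal.ofReal s)
    (hE : NullMeasurableSet E μH[s])
    (hE0 : 0 < μH[s] E) (hEfin : μH[s] E < ⊤) :
    ∃ X : Set (EuclideanSpace ℝ (Fin n)),
      X ⊆ Metric.sphere (0 : EuclideanSpace ℝ (Fin n)) 1 ∧
      dimH X ≤ ((n - 2 : ℕ) : ENNReal) + ENNReal.ofReal s ∧
      ∀ e ∈ Metric.sphere (0 : EuclideanSpace ℝ (Fin n)) 1, e ∉ X →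
        ∀ F : Set (EuclideanSpace ℝ (Fin n)), F ⊆ E →
          NullMeasurableSet F μH[s] → 0 < μH[s] F →
          dimH ((fun x => ⟪x, e⟫) '' F) = ENNReal.ofReal s := by
  have : IsFiniteMeasure (μH[s].restrict E) := isFiniteMeasure_restrict.2 hEfin.ne
  obtain ⟨X, hX, hdimX, hproj⟩ := strong_line_projection_dimension_general (d := n - 2)
    (by rw [finrank_euclideanSpace_fin]; omega) hs0 hdimE.le
  exact ⟨X, hX, hdimX, fun e he heX F hFE _ hF => hproj e he heX F hFE hF.ne'⟩
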